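/- arXiv:2412.06342 — 6 statements merged into one kernel-verified Lean document; each statement's English description precedes it below -/
import Mathlib

section
/- Let n ≥ 1, k ≥ 1, and let τ = (τ₀,…,τ_{k−1}) : (ℝⁿ)ᵏ → (ℝⁿ)ᵏ be k times continuously differentiable. Suppose the consistency identity holds for all z ∈ (ℝⁿ)ᵏ and u ∈ ℝⁿ. Then: (i) for every z the Jacobian Dτ(z) is block lower triangular (the n×n block Dτ(z)_{i,j} vanishes whenever j > i) and every diagonal block Dτ(z)_{i,i} equals the diagonal positive-definite matrix B̂(τ(z))B(z)⁻¹; in particular Dτ(z) is invertible at every z; (ii) the first block τ₀ depends only on z₀, i.e. there exists φ : ℝⁿ → ℝⁿ with τ₀(z) = φ(z₀) for all z, and φ acts componentwise with each component a strictly increasing function of the corresponding coordinate; in particular φ is injective. -/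
/-!
Write `Dτ(z)` in blocks and `M(z) = B̂(τ(z)) B(z)⁻¹`. Varying `u` in the consistency identity shows
that the last block column of `Dτ` is `(0, …, 0, M)` (`fderiv_last`).

The remaining columns follow by descending from column `j + 1` to column `j`
(`fderiv_step`). If `Dτ_{i,j+1} = 0` everywhere, where `i ≤ j`, then `τ_i`, and hence also `Dτ_i`, is
invariant under translations `w` of block `j + 1`. The `i`-th row of the consistency identity reads
`τ_{i+1}(z) = Dτ_i(z) · (z₁, …, z_{k-1}, F(z))`; comparing it at `z + w` and at `z`, and discarding the
last block because `Dτ_{i,k-1} = 0`, gives `τ_{i+1}(z + w) = τ_{i+1}(z) + Dτ_{i,j}(z) w`. Thus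
`Dτ_{i+1,j+1} = Dτ_{i,j}`, which carries the shape `(0, …, 0, M, *, …)` one column to the left
(`fderiv_column`). Using translation invariance rather than the symmetry of second derivatives
keeps the argument within `C¹` maps.

Invertibility is forward substitution along the rows. Finally the first row of `Dτ(z)` is
`(M(z), 0, …, 0)` with `M(z)` diagonal and positive, so the `a`-th component of `τ₀` depends only on
the `a`-th coordinate of `z₀`, and is strictly increasing in it.
-/

open Matrix

noncomputable section

/-- `shiftVec f last` is the vector `(f₁, …, f_{k-1}, last)` obtained from
`f = (f₀, …, f_{k-1})` by shifting the blocks and putting `last` in the last block. -/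
def shiftVec {n k : ℕ} (f : Fin k → Fin n → ℝ) (last : Fin n → ℝ) : Fin k → Fin n → ℝ :=
  fun i => if h : (i : ℕ) + 1 < k then f ⟨(i : ℕ) + 1, h⟩ else last

/-- The `(i,j)`-th `n × n` block of the Jacobian of `τ` at `z`. -/
def jacBlock {n k : ℕ} (τ : (Fin k → Fin n → ℝ) → Fin k → Fin n → ℝ)
    (z : Fin k → Fin n → ℝ) (i j : Fin k) : Matrix (Fin n) (Fin n) ℝ :=
  Matrix.of fun a b => fderiv ℝ τ z (Pi.single j (Pi.single b 1)) i a

/-- The consistency identity: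
`(τ₁(z), …, τ_{k-1}(z), Fhat(τ(z)) + Bhat(τ(z))u) = Dτ(z) ⬝ (z₁, …, z_{k-1}, F(z) + B(z)u)`. -/
def Consistent {n k : ℕ} (F Fhat : (Fin k → Fin n → ℝ) → Fin n → ℝ)
    (B Bhat : (Fin k → Fin n → ℝ) → Matrix (Fin n) (Fin n) ℝ)
    (τ : (Fin k → Fin n → ℝ) → Fin k → Fin n → ℝ) : Prop :=
  ∀ (z : Fin k → Fin n → ℝ) (u : Fin n → ℝ),
    shiftVec (τ z) (Fhat (τ z) + (Bhat (τ z)).mulVec u)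
      = fderiv ℝ τ z (shiftVec z (F z + (B z).mulVec u))

section Helpers

variable {n k : ℕ}

lemma eq_of_fderiv_direction_eq_zero {E G : Type*} [NormedAddCommGroup E] [NormedSpace ℝ E]
    [NormedAddCommGroup G] [NormedSpace ℝ G] {f : E → G} (hf : Differentiable ℝ f) (w : E)
    (h : ∀ z, fderiv ℝ f z w = 0) (z : E) : f (z + w) = f z := by
  have hd : ∀ t : ℝ, HasDerivAt (fun t : ℝ => f (z + t • w)) 0 t := by
    intro t
    have h1 : HasDerivAt (fun t : ℝ => z + t • w) w t := by
      simpa using ((hasDerivAt_id t).smul_const w).const_add z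
    have h2 := (hf (z + t • w)).hasFDerivAt.comp_hasDerivAt t h1
    rwa [h] at h2
  have := is_const_of_deriv_eq_zero (fun t => (hd t).differentiableAt)
    (fun t => (hd t).deriv) 1 0
  simpa using this

lemma fderiv_block {τ : (Fin k → Fin n → ℝ) → Fin k → Fin n → ℝ} (hτ : Differentiable ℝ τ)
    (z v : Fin k → Fin n → ℝ) (i : Fin k) :
    fderiv ℝ (fun x => τ x i) z v = fderiv ℝ τ z v i := by
  rw [(hasFDerivAt_pi'.1 (hτ z).hasFDerivAt i).fderiv]
  rfl

lemma mul_inv_mulVec_apply {A C : Matrix (Fin n) (Fin n) ℝ} (hA : A.IsDiag) (hC : C.IsDiag)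
    (hpos : ∀ a, 0 < A a a) (v : Fin n → ℝ) (a : Fin n) :
    ((C * A⁻¹).mulVec v) a = C a a / A a a * v a := by
  have hinv : A⁻¹ = diagonal (fun a => (A a a)⁻¹) := by
    apply Matrix.inv_eq_right_inv
    conv_lhs => rw [← hA.diagonal_diag]
    rw [diagonal_mul_diagonal, ← diagonal_one]
    congr 1
    funext b
    simpa using mul_inv_cancel₀ (hpos b).ne'
  conv_lhs => rw [hinv, ← hC.diagonal_diag, diagonal_mul_diagonal]
  simp [mulVec_diagonal, div_eq_mul_inv]

lemma isUnit_det_of_isDiag {A : Matrix (Fin n) (Fin n) ℝ} (hA : A.IsDiag)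
    (hpos : ∀ a, 0 < A a a) : IsUnit A.det := by
  rw [← hA.diagonal_diag, det_diagonal]
  exact (Finset.prod_pos fun a _ => hpos a).ne'.isUnit

lemma shiftVec_add_last (z : Fin k → Fin n → ℝ) (p q : Fin n → ℝ) (i : Fin k)
    (hi : (i : ℕ) + 1 = k) :
    shiftVec z (p + q) = shiftVec z p + Pi.single i q := by
  funext l
  rcases eq_or_ne l i with rfl | hl
  · simp [shiftVec, hi]
  · have : (l : ℕ) + 1 < k := by
      have := l.2
      have : (l : ℕ) ≠ i := fun h => hl (Fin.ext h)
      omega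
    simp [shiftVec, this, hl]

lemma shiftVec_add_single (z : Fin k → Fin n → ℝ) (p w : Fin n → ℝ) (j : ℕ) (hj : j + 1 < k) :
    shiftVec (z + Pi.single ⟨j + 1, hj⟩ w) p
      = shiftVec z p + Pi.single ⟨j, by omega⟩ w := by
  funext l
  rcases eq_or_ne l ⟨j, by omega⟩ with rfl | hl
  · simp [shiftVec, hj]
  · have hne : (l : ℕ) ≠ j := fun h => hl (Fin.ext h)
    by_cases h : (l : ℕ) + 1 < k
    · simp [shiftVec, h, hl, hne]
    · simp [shiftVec, h, hl]

variable {F Fhat : (Fin k → Fin n → ℝ) → Fin n → ℝ}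
  {B Bhat : (Fin k → Fin n → ℝ) → Matrix (Fin n) (Fin n) ℝ}
  {τ : (Fin k → Fin n → ℝ) → Fin k → Fin n → ℝ}

/-- The last block column of the Jacobian, obtained by varying the input `u`. -/
lemma fderiv_last (hB : ∀ z, IsUnit (B z).det) (hcons : Consistent F Fhat B Bhat τ)
    (l : Fin k) (hl : (l : ℕ) + 1 = k) (z : Fin k → Fin n → ℝ) (v : Fin n → ℝ) :
    fderiv ℝ τ z (Pi.single l v) = Pi.single l ((Bhat (τ z) * (B z)⁻¹).mulVec v) := by
  have h0 := hcons z 0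
  have h1 := hcons z ((B z)⁻¹.mulVec v)
  rw [mulVec_mulVec, mulVec_mulVec, mul_nonsing_inv _ (hB z), one_mulVec,
    shiftVec_add_last _ _ _ l hl, shiftVec_add_last _ _ _ l hl, map_add] at h1
  simp only [mulVec_zero, add_zero] at h0
  rw [h0] at h1
  exact (add_left_cancel h1).symm

/-- If block `τ_i` has no derivative in block `j + 1`, where `i ≤ j`, then
`Dτ_{i+1,j+1} = Dτ_{i,j}`. -/
lemma fderiv_step (hτ : Differentiable ℝ τ) (hB : ∀ z, IsUnit (B z).det)
    (hcons : Consistent F Fhat B Bhat τ) (i j : ℕ) (hj : j + 1 < k) (hij : i ≤ j)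
    (w : Fin n → ℝ)
    (h0 : ∀ z (v : Fin n → ℝ), fderiv ℝ τ z (Pi.single ⟨j + 1, hj⟩ v) ⟨i, by omega⟩ = 0)
    (z : Fin k → Fin n → ℝ) :
    fderiv ℝ τ z (Pi.single ⟨j + 1, hj⟩ w) ⟨i + 1, by omega⟩
      = fderiv ℝ τ z (Pi.single ⟨j, by omega⟩ w) ⟨i, by omega⟩ := by
  have hblk : ∀ i : Fin k, Differentiable ℝ (fun x => τ x i) :=
    fun i => differentiable_pi.1 hτ i
  have hrow : ∀ z, τ z ⟨i + 1, by omega⟩ = fderiv ℝ τ z (shiftVec z (F z)) ⟨i, by omega⟩ := by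
    intro z
    have := congrFun (hcons z 0) ⟨i, by omega⟩
    simpa [shiftVec, show i + 1 < k by omega] using this
  -- `Dτ_i` is invariant under translations of block `j + 1`, since `τ_i` is.
  have hinv : ∀ (v : Fin n → ℝ) (x : Fin k → Fin n → ℝ),
      fderiv ℝ τ (z + Pi.single ⟨j + 1, hj⟩ v) x ⟨i, by omega⟩
        = fderiv ℝ τ z x ⟨i, by omega⟩ := by
    intro v x
    rw [← fderiv_block hτ, ← fderiv_block hτ, ← fderiv_comp_add_right]
    congr 2
    funext y
    apply eq_of_fderiv_direction_eq_zero (hblk ⟨i, by omega⟩)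
    intro y
    rw [fderiv_block hτ]
    exact h0 y v
  have haff : ∀ v : Fin n → ℝ, τ (z + Pi.single ⟨j + 1, hj⟩ v) ⟨i + 1, by omega⟩
      = τ z ⟨i + 1, by omega⟩ + fderiv ℝ τ z (Pi.single ⟨j, by omega⟩ v) ⟨i, by omega⟩ := by
    intro v
    have hlast : ((⟨k - 1, by omega⟩ : Fin k) : ℕ) + 1 = k := by simp; omega
    have hF : F (z + Pi.single ⟨j + 1, hj⟩ v)
        = F z + (F (z + Pi.single ⟨j + 1, hj⟩ v) - F z) := by abel
    have hne : (⟨i, by omega⟩ : Fin k) ≠ ⟨k - 1, by omega⟩ := by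
      simp only [ne_eq, Fin.mk.injEq]; omega
    rw [hrow, hrow z, hinv, shiftVec_add_single, hF, shiftVec_add_last _ _ _ _ hlast, map_add,
      map_add, fderiv_last hB hcons _ hlast]
    simp [hne]
  have hline : HasDerivAt (fun t : ℝ => z + t • (Pi.single ⟨j + 1, hj⟩ w : Fin k → Fin n → ℝ))
      (Pi.single ⟨j + 1, hj⟩ w) 0 := by
    simpa using ((hasDerivAt_id (0 : ℝ)).smul_const
      (Pi.single ⟨j + 1, hj⟩ w : Fin k → Fin n → ℝ)).const_add z
  have hd1 := (hblk ⟨i + 1, by omega⟩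
    (z + (0 : ℝ) • (Pi.single ⟨j + 1, hj⟩ w : Fin k → Fin n → ℝ))).hasFDerivAt.comp_hasDerivAt 0 hline
  rw [fderiv_block hτ, zero_smul, add_zero] at hd1
  have hd2 : HasDerivAt (fun t : ℝ => τ z ⟨i + 1, by omega⟩
      + t • fderiv ℝ τ z (Pi.single ⟨j, by omega⟩ w) ⟨i, by omega⟩)
      (fderiv ℝ τ z (Pi.single ⟨j, by omega⟩ w) ⟨i, by omega⟩) 0 := by
    simpa using ((hasDerivAt_id (0 : ℝ)).smul_const
      (fderiv ℝ τ z (Pi.single ⟨j, by omega⟩ w) ⟨i, by omega⟩)).const_add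
        (τ z ⟨i + 1, by omega⟩)
  refine hd1.unique (hd2.congr_of_eventuallyEq (Filter.Eventually.of_forall fun t => ?_))
  simp only [Function.comp]
  rw [← Pi.single_smul, haff, Pi.single_smul, map_smul]
  rfl

/-- Column `k - 1 - d` of the Jacobian vanishes above the diagonal and has diagonal block
`B̂(τ(z)) B(z)⁻¹`; induction on the distance `d` from the last column. -/
lemma fderiv_column (hτ : Differentiable ℝ τ) (hB : ∀ z, IsUnit (B z).det)
    (hcons : Consistent F Fhat B Bhat τ) (d : ℕ) :
    ∀ (j : ℕ) (hj : j < k), j + d + 1 = k → ∀ (z : Fin k → Fin n → ℝ) (v : Fin n → ℝ),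
      (∀ (i : ℕ) (hi : i < j), fderiv ℝ τ z (Pi.single ⟨j, hj⟩ v) ⟨i, hi.trans hj⟩ = 0)
      ∧ fderiv ℝ τ z (Pi.single ⟨j, hj⟩ v) ⟨j, hj⟩ = (Bhat (τ z) * (B z)⁻¹).mulVec v := by
  induction d with
  | zero =>
    intro j hj hjk z v
    rw [fderiv_last hB hcons ⟨j, hj⟩ hjk]
    refine ⟨fun i hi => ?_, by simp⟩
    have : (⟨i, hi.trans hj⟩ : Fin k) ≠ ⟨j, hj⟩ := by
      simp only [ne_eq, Fin.mk.injEq]; omega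
    simp [this]
  | succ d ih =>
    intro j hj hjk z v
    have hj1 : j + 1 < k := by omega
    have key : ∀ (i : ℕ) (hij : i ≤ j), _ := fun i hij =>
      fderiv_step hτ hB hcons i j hj1 hij v
        (fun z v => (ih (j + 1) hj1 (by omega) z v).1 i (by omega)) z
    refine ⟨fun i hi => ?_, ?_⟩
    · rw [← key i hi.le]
      exact (ih (j + 1) hj1 (by omega) z v).1 (i + 1) (by omega)
    · rw [← key j le_rfl]
      exact (ih (j + 1) hj1 (by omega) z v).2

end Helpers

theorem stmt0 {n k : ℕ} (hn : 1 ≤ n) (hk : 0 < k)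
    (F Fhat : (Fin k → Fin n → ℝ) → Fin n → ℝ)
    (B Bhat : (Fin k → Fin n → ℝ) → Matrix (Fin n) (Fin n) ℝ)
    (bh bhath : ℝ) (hbh : 0 < bh) (hbhath : 0 < bhath)
    (hBdiag : ∀ z, (B z).IsDiag) (hBpos : ∀ z a, bh ≤ B z a a)
    (hBhatdiag : ∀ zh, (Bhat zh).IsDiag) (hBhatpos : ∀ zh a, bhath ≤ Bhat zh a a)
    (τ : (Fin k → Fin n → ℝ) → Fin k → Fin n → ℝ)
    (hτ : ContDiff ℝ k τ)
    (hcons : Consistent F Fhat B Bhat τ) :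
    (∀ z : Fin k → Fin n → ℝ,
        (∀ i j : Fin k, i < j → jacBlock τ z i j = 0)
        ∧ (∀ i : Fin k, jacBlock τ z i i = Bhat (τ z) * (B z)⁻¹)
        ∧ Function.Bijective (fderiv ℝ τ z))
    ∧ ∃ g : Fin n → ℝ → ℝ,
        (∀ a, StrictMono (g a))
        ∧ (∀ (z : Fin k → Fin n → ℝ) (a : Fin n), τ z ⟨0, hk⟩ a = g a (z ⟨0, hk⟩ a))
        ∧ Function.Injective (fun (v : Fin n → ℝ) (a : Fin n) => g a (v a)) := by
  have hτd : Differentiable ℝ τ := hτ.differentiable (by exact_mod_cast hk.ne')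
  have hBp : ∀ z a, 0 < B z a a := fun z a => hbh.trans_le (hBpos z a)
  have hBhp : ∀ z a, 0 < Bhat z a a := fun z a => hbhath.trans_le (hBhatpos z a)
  have hBu : ∀ z, IsUnit (B z).det := fun z => isUnit_det_of_isDiag (hBdiag z) (hBp z)
  have hM : ∀ z v a, ((Bhat (τ z) * (B z)⁻¹).mulVec v) a
      = Bhat (τ z) a a / B z a a * v a :=
    fun z v a => mul_inv_mulVec_apply (hBdiag z) (hBhatdiag _) (hBp z) v a
  have hlow : ∀ z v (i j : Fin k), i < j → fderiv ℝ τ z (Pi.single j v) i = 0 :=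
    fun z v i j hij => (fderiv_column hτd hBu hcons (k - 1 - j) j j.2 (by omega) z v).1 i hij
  have hdiag : ∀ z v (i : Fin k),
      fderiv ℝ τ z (Pi.single i v) i = (Bhat (τ z) * (B z)⁻¹).mulVec v :=
    fun z v i => (fderiv_column hτd hBu hcons (k - 1 - i) i i.2 (by omega) z v).2
  have hsum : ∀ z v (i : Fin k),
      fderiv ℝ τ z v i = ∑ j, fderiv ℝ τ z (Pi.single j (v j)) i := by
    intro z v i
    conv_lhs => rw [← Finset.univ_sum_single v, map_sum, Finset.sum_apply]
  -- Forward substitution: row `i` of `Dτ(z)` only sees `v i` once the earlier blocks vanish.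
  have hrow : ∀ z (v : Fin k → Fin n → ℝ) (i : Fin k), (∀ j < i, v j = 0) →
      fderiv ℝ τ z v i = (Bhat (τ z) * (B z)⁻¹).mulVec (v i) := by
    intro z v i hv
    rw [hsum, Finset.sum_eq_single i, hdiag]
    · intro j _ hji
      rcases lt_or_gt_of_ne hji with h | h
      · simp [hv j h]
      · exact hlow z _ i j h
    · simp
  refine ⟨fun z => ⟨fun i j hij => ?_, fun i => ?_, ?_⟩, ?_⟩
  · ext a b
    simp [jacBlock, hlow z _ i j hij]
  · ext a b
    simp [jacBlock, hdiag z]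
  · have hinj : Function.Injective (fderiv ℝ τ z) := by
      rw [injective_iff_map_eq_zero]
      intro v hv
      have : ∀ (m : ℕ) (hm : m < k), v ⟨m, hm⟩ = 0 := by
        intro m
        induction m using Nat.strong_induction_on with
        | _ m ih =>
          intro hm
          have h := hrow z v ⟨m, hm⟩ (fun j hj => ih j hj j.2)
          rw [hv] at h
          funext a
          have h' := congrFun h a
          rw [hM] at h'
          have := (div_pos (hBhp (τ z) a) (hBp z a)).ne'
          simpa [this] using h'.symm
      funext i
      exact this i i.2
    exact ⟨hinj, (LinearMap.injective_iff_surjective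
      (f := (fderiv ℝ τ z : (Fin k → Fin n → ℝ) →ₗ[ℝ] (Fin k → Fin n → ℝ)))).1 hinj⟩
  · have hzero : ∀ z v a, fderiv ℝ (fun x => τ x ⟨0, hk⟩ a) z v
        = Bhat (τ z) a a / B z a a * v ⟨0, hk⟩ a := by
      intro z v a
      have h1 := hrow z v ⟨0, hk⟩ (fun j hj => absurd hj (Nat.not_lt_zero _))
      rw [(hasFDerivAt_pi'.1 (hasFDerivAt_pi'.1 (hτd z).hasFDerivAt ⟨0, hk⟩) a).fderiv, ← hM,
        ← h1]
      rfl
    have hcd : ∀ a, Differentiable ℝ (fun x => τ x ⟨0, hk⟩ a) :=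
      fun a => differentiable_pi.1 (differentiable_pi.1 hτd _) a
    have hmono : ∀ a, StrictMono (fun t : ℝ => τ (fun _ _ => t) ⟨0, hk⟩ a) := by
      intro a
      apply strictMono_of_deriv_pos
      intro t
      have hl : HasDerivAt (fun t : ℝ => (fun _ _ => t : Fin k → Fin n → ℝ))
          (fun _ _ => 1) t :=
        hasDerivAt_pi.2 fun _ => hasDerivAt_pi.2 fun _ => hasDerivAt_id t
      have hc := (hcd a (fun _ _ => t)).hasFDerivAt.comp_hasDerivAt t hl
      rw [hzero, mul_one] at hc
      exact (div_pos (hBhp _ a) (hBp _ a)).trans_eq hc.deriv.symm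
    refine ⟨fun a t => τ (fun _ _ => t) ⟨0, hk⟩ a, hmono, fun z a => ?_, fun v w h => ?_⟩
    · -- `z` and the constant vector differ by `w` with vanishing coordinate `a` in block `0`.
      have := eq_of_fderiv_direction_eq_zero (hcd a) (z - fun _ _ => z ⟨0, hk⟩ a)
        (fun y => by rw [hzero]; simp) (fun _ _ => z ⟨0, hk⟩ a)
      simpa using this
    · funext a
      exact (hmono a).injective (congrFun h a)
end
end

section
/- Let n ≥ 1, k ≥ 1, and let τ : (ℝⁿ)ᵏ → (ℝⁿ)ᵏ be k times continuously differentiable satisfying the consistency identity for all z and u, with constant diagonal positive B(z) ≡ B and B̂(ẑ) ≡ B̂, ΔB = B̂B⁻¹, and suppose (as follows from the constant-B case) τ(z) = diag(ΔB,…,ΔB) z + (c,0,…,0) for some c ∈ ℝⁿ. Assume additionally that F and F̂ are linear: F(z) = 𝐅z and F̂(ẑ) = 𝐅̂ẑ for n×(nk) real matrices 𝐅, 𝐅̂. Then 𝐅̂ · diag(ΔB,…,ΔB) = ΔB · 𝐅 as n×(nk) matrices, and 𝐅̂ · (c,0,…,0) = 0 ∈ ℝⁿ. Moreover, if the first n×n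 block of 𝐅 (its restriction to the z₀-coordinates) is nonsingular, then c = 0. -/
/-!
Since `τ` is affine with linear part `ΔB` acting on every block, the last block of the consistency
identity at `u = 0` reads `Fhat (τ z) = ΔB (F z)` (`consistency_last_block`). At `z = 0` this says
that `FhatM` annihilates `(c, 0, …, 0)`; subtracting, the linear parts agree, which is the matrix
identity. If the first block of `FM` is invertible, evaluate the identity at `(ΔB⁻¹ c, 0, …, 0)`:
the left side is `FhatM (c, 0, …, 0) = 0`, so `ΔB` times the first block of `FM` kills `ΔB⁻¹ c`,
whence `c = 0`.
-/

open Matrix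

noncomputable section

/-- The `nk × nk` block diagonal matrix `diag(ΔB, …, ΔB)` with `k` copies of the
`n × n` matrix `ΔB` on the diagonal. -/
def blockDiagCopies {n k : ℕ} (ΔB : Matrix (Fin n) (Fin n) ℝ) :
    Matrix (Fin k × Fin n) (Fin k × Fin n) ℝ :=
  Matrix.of fun p q => if p.1 = q.1 then ΔB p.2 q.2 else 0

theorem blockDiagCopies_mulVec {n k : ℕ} (D : Matrix (Fin n) (Fin n) ℝ)
    (v : Fin k × Fin n → ℝ) :
    (blockDiagCopies (k := k) D).mulVec v = fun p => D.mulVec (fun b => v (p.1, b)) p.2 := by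
  ext p
  simp only [blockDiagCopies, Matrix.mulVec, dotProduct, Matrix.of_apply, Fintype.sum_prod_type]
  rw [Finset.sum_eq_single p.1]
  · simp
  · intro b _ hb
    simp [hb.symm]
  · simp

/-- A map that is `D` on every block plus a constant has derivative `D` on every block. -/
theorem fderiv_blockwise_affine {n k : ℕ} (D : Matrix (Fin n) (Fin n) ℝ)
    (e : Fin k → Fin n → ℝ) (τ : (Fin k → Fin n → ℝ) → Fin k → Fin n → ℝ)
    (hτ : ∀ z i, τ z i = D.mulVec (z i) + e i) (z w : Fin k → Fin n → ℝ) (i : Fin k) :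
    fderiv ℝ τ z w i = D.mulVec (w i) := by
  let L : (Fin k → Fin n → ℝ) →L[ℝ] (Fin k → Fin n → ℝ) :=
    LinearMap.toContinuousLinearMap
      (LinearMap.pi fun i => (Matrix.mulVecLin D).comp (LinearMap.proj i))
  have hL : τ = fun z => L z + e := by
    funext z i
    rw [hτ]
    rfl
  rw [hL, fderiv_add_const, L.fderiv]
  rfl

/-- The last block of the consistency identity, with `u = 0`. -/
theorem consistency_last_block {n k : ℕ} (hk : 0 < k)
    (F Fhat : (Fin k → Fin n → ℝ) → Fin n → ℝ)
    (B Bhat : (Fin k → Fin n → ℝ) → Matrix (Fin n) (Fin n) ℝ)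
    (D : Matrix (Fin n) (Fin n) ℝ) (e : Fin k → Fin n → ℝ)
    (τ : (Fin k → Fin n → ℝ) → Fin k → Fin n → ℝ)
    (hcons : Consistent F Fhat B Bhat τ)
    (hτ : ∀ z i, τ z i = D.mulVec (z i) + e i) (z : Fin k → Fin n → ℝ) :
    Fhat (τ z) = D.mulVec (F z) := by
  have h := congrFun (hcons z 0) ⟨k - 1, by omega⟩
  rw [fderiv_blockwise_affine D e τ hτ] at h
  have hlt : ¬ (k - 1 + 1 < k) := by omega
  simpa [shiftVec, hlt] using h

theorem isUnit_det_of_isDiag_pos {n : ℕ} (B : Matrix (Fin n) (Fin n) ℝ)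
    (hd : B.IsDiag) (hp : ∀ a, 0 < B a a) : IsUnit B.det := by
  rw [← hd.diagonal_diag, Matrix.det_diagonal]
  exact (Finset.prod_pos fun a _ => hp a).ne'.isUnit

theorem stmt3 {n k : ℕ} (hn : 1 ≤ n) (hk : 0 < k)
    (F Fhat : (Fin k → Fin n → ℝ) → Fin n → ℝ)
    (B Bhat : Matrix (Fin n) (Fin n) ℝ)
    (hBdiag : B.IsDiag) (hBpos : ∀ a, 0 < B a a)
    (hBhatdiag : Bhat.IsDiag) (hBhatpos : ∀ a, 0 < Bhat a a)
    (τ : (Fin k → Fin n → ℝ) → Fin k → Fin n → ℝ)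
    (hτ : ContDiff ℝ k τ)
    (hcons : Consistent F Fhat (fun _ => B) (fun _ => Bhat) τ)
    (c : Fin n → ℝ)
    -- τ(z) = diag(ΔB, …, ΔB) z + (c, 0, …, 0), with ΔB = Bhat * B⁻¹
    (hτeq : ∀ (z : Fin k → Fin n → ℝ) (i : Fin k),
      τ z i = (Bhat * B⁻¹).mulVec (z i) + if (i : ℕ) = 0 then c else 0)
    -- F and Fhat are linear, given by n × (nk) matrices FM and FhatM
    (FM FhatM : Matrix (Fin n) (Fin k × Fin n) ℝ)
    (hF : ∀ z : Fin k → Fin n → ℝ, F z = FM.mulVec fun p => z p.1 p.2)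
    (hFhat : ∀ zh : Fin k → Fin n → ℝ, Fhat zh = FhatM.mulVec fun p => zh p.1 p.2) :
    FhatM * blockDiagCopies (k := k) (Bhat * B⁻¹) = (Bhat * B⁻¹) * FM
    ∧ FhatM.mulVec (fun p : Fin k × Fin n => if (p.1 : ℕ) = 0 then c p.2 else 0) = 0
    ∧ (IsUnit (Matrix.of fun a b : Fin n => FM a (⟨0, hk⟩, b)) → c = 0) := by
  set D := Bhat * B⁻¹ with hD
  have hDdet : IsUnit D.det := by
    rw [hD, Matrix.det_mul]
    exact (isUnit_det_of_isDiag_pos Bhat hBhatdiag hBhatpos).mul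
      (Matrix.isUnit_nonsing_inv_det B (isUnit_det_of_isDiag_pos B hBdiag hBpos))
  set C : Fin k × Fin n → ℝ := fun p => if (p.1 : ℕ) = 0 then c p.2 else 0 with hC
  have key : ∀ v : Fin k × Fin n → ℝ,
      FhatM.mulVec ((blockDiagCopies (k := k) D).mulVec v) + FhatM.mulVec C
        = D.mulVec (FM.mulVec v) := by
    intro v
    have h := consistency_last_block hk F Fhat _ _ D _ τ hcons hτeq (fun i b => v (i, b))
    rw [hF, hFhat] at h
    rw [← Matrix.mulVec_add, ← h, blockDiagCopies_mulVec]
    congr 1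
    funext p
    rw [hτeq]
    simp only [hC, Pi.add_apply]
    split_ifs <;> rfl
  have hC0 : FhatM.mulVec C = 0 := by simpa using key 0
  have hmat : FhatM * blockDiagCopies (k := k) D = D * FM := by
    apply Matrix.ext_of_mulVec_single
    intro p
    have h := key (Pi.single p 1)
    rwa [hC0, add_zero, Matrix.mulVec_mulVec, Matrix.mulVec_mulVec] at h
  refine ⟨hmat, hC0, fun hU => ?_⟩
  set d := D⁻¹.mulVec c with hd
  have hDd : D.mulVec d = c := by
    rw [hd, Matrix.mulVec_mulVec, Matrix.mul_nonsing_inv _ hDdet, Matrix.one_mulVec]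
  let v : Fin k × Fin n → ℝ := fun p => if (p.1 : ℕ) = 0 then d p.2 else 0
  have hv : (blockDiagCopies (k := k) D).mulVec v = C := by
    rw [blockDiagCopies_mulVec]
    funext p
    by_cases hp : (p.1 : ℕ) = 0
    · simp [v, hC, hp, hDd]
    · have h0 : (fun _ : Fin n => (0 : ℝ)) = 0 := rfl
      simp [v, hC, hp, h0]
  have hFv : FM.mulVec v = (Matrix.of fun a b : Fin n => FM a (⟨0, hk⟩, b)).mulVec d := by
    funext a
    simp only [Matrix.mulVec, dotProduct, Fintype.sum_prod_type, Matrix.of_apply]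
    rw [Finset.sum_eq_single (⟨0, hk⟩ : Fin k)]
    · simp [v]
    · intro i _ hi
      have hi' : (i : ℕ) ≠ 0 := fun h => hi (Fin.ext h)
      simp [v, hi']
    · simp
  have h := key v
  rw [hv, hC0, add_zero, hFv] at h
  have hinjD := Matrix.mulVec_injective_of_isUnit ((Matrix.isUnit_iff_isUnit_det D).2 hDdet)
  have hd0 : d = 0 := Matrix.mulVec_injective_of_isUnit hU (hinjD (by simpa using h.symm))
  rw [← hDd, hd0, Matrix.mulVec_zero]
end
end

section
/- Let n ≥ 1, k ≥ 1, and let τ : (ℝⁿ)ᵏ → (ℝⁿ)ᵏ be a homeomorphism. Let z_d : ℝ → (ℝⁿ)ᵏ be a bounded reference trajectory and z : ℝ → (ℝⁿ)ᵏ the closed-loop trajectory. Write ẑ(t) = τ(z(t)) = (q̂₀(t),…,q̂_{k−1}(t)) and ẑ_d(t) = τ(z_d(t)) = (q̂_{d,0}(t),…,q̂_{d,k−1}(t)), and assume both are differentiable and satisfy the chain relations: d/dt q̂_i(t) = q̂_{i+1}(t) and d/dt q̂_{d,i}(t) = q̂_{d,i+1}(t) for 0 ≤ i ≤ k−2, and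 d/dt q̂_{k−1}(t) = F̂(ẑ(t)) + B̂(ẑ(t))u(t), where the feedback-linearization controller is u(t) = B̂(ẑ(t))⁻¹[ −F̂(ẑ(t)) + d/dt q̂_{d,k−1}(t) + Σ_{i=0}^{k−1} K_i (q̂_{d,i}(t) − q̂_i(t)) ]. If the block companion matrix A built from K₀,…,K_{k−1} is Hurwitz, then z(t) − z_d(t) → 0 as t → +∞. -/
/-!
Substituting the controller into the last chain relation cancels `F̂` and `B̂` (the diagonal matrix
`B̂` is invertible because its entries are positive), so the error `e = τ ∘ z - τ ∘ zd` solves the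
linear system `e' = A e` with `A` the block companion matrix.

A Hurwitz linear system has decaying solutions (`IsHurwitz.tendsto_zero`). Over `ℂ`,
Cayley-Hamilton gives `∏ (A - μᵢ) = 0` with `re μᵢ < 0`; removing the factors one at a time
reduces the claim to a scalar equation `f' = μ f + g` with `g → 0`
(`tendsto_zero_of_hasDerivAt_smul_add`).

Finally, `zd` is bounded, so `τ ∘ zd` stays in a compact set, near which `τ⁻¹` is uniformly
continuous; hence `e → 0` implies `z - zd → 0` (`Homeomorph.tendsto_sub_of_image`).
-/

open Matrix Filter

noncomputable section

/-- The `nk × nk` block companion matrix with identity blocks on the superdiagonal and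
last block row `(-K₀, -K₁, …, -K_{k-1})`. -/
def companionMat {n k : ℕ} (K : Fin k → Matrix (Fin n) (Fin n) ℝ) :
    Matrix (Fin k × Fin n) (Fin k × Fin n) ℝ :=
  Matrix.of fun p q =>
    if (q.1 : ℕ) = (p.1 : ℕ) + 1 then (if p.2 = q.2 then 1 else 0)
    else if (p.1 : ℕ) = k - 1 then -(K q.1 p.2 q.2) else 0

/-- A real square matrix is Hurwitz if every eigenvalue of it, regarded as a complex matrix,
has negative real part. -/
def IsHurwitz {m : Type*} [Fintype m] [DecidableEq m] (A : Matrix m m ℝ) : Prop :=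
  ∀ μ ∈ spectrum ℂ (A.map fun x : ℝ => (x : ℂ)), μ.re < 0

/-- A stable scalar linear equation with vanishing forcing has vanishing solutions. Since the
derivative of `exp (-μ t) • f t` is `exp (-μ t) • g t`, whose norm is eventually at most
`δ exp (-(re μ) t)`, the mean value inequality bounds `‖f t‖` by a decaying exponential plus
`δ / (-(re μ))`. -/
theorem tendsto_zero_of_hasDerivAt_smul_add {V : Type*} [NormedAddCommGroup V] [NormedSpace ℂ V]
    {μ : ℂ} (hμ : μ.re < 0) {f g : ℝ → V}
    (hf : ∀ t, HasDerivAt f (μ • f t + g t) t) (hg : Tendsto g atTop (nhds 0)) :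
    Tendsto f atTop (nhds 0) := by
  obtain ⟨a, ha, haμ⟩ : ∃ a : ℝ, 0 < a ∧ μ.re = -a := ⟨-μ.re, by linarith, by simp⟩
  have hnorm : ∀ t : ℝ, ‖Complex.exp (-μ * t)‖ = Real.exp (a * t) := by
    intro t
    rw [Complex.norm_exp]
    simp [haμ]
  have hexp : ∀ t : ℝ, HasDerivAt (fun s : ℝ => Complex.exp (-μ * s))
      (Complex.exp (-μ * t) * -μ) t := by
    intro t
    have h1 : HasDerivAt (fun s : ℝ => -μ * (s : ℂ)) (-μ) t := by
      simpa using (Complex.ofRealCLM.hasDerivAt (x := t)).const_mul (-μ)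
    exact h1.cexp
  have hh : ∀ t : ℝ, HasDerivAt (fun s : ℝ => Complex.exp (-μ * s) • f s)
      (Complex.exp (-μ * t) • g t) t := by
    intro t
    refine ((hexp t).smul (hf t)).congr_deriv ?_
    module
  rw [Metric.tendsto_atTop]
  intro ε hε
  -- With forcing at most `a * ε / 2`, its contribution to `‖f t‖` is at most `ε / 2`.
  have hδ : 0 < a * ε / 2 := by positivity
  obtain ⟨t₀, ht₀⟩ := (Metric.tendsto_atTop.1 hg) (a * ε / 2) hδ
  set c : ℝ := ‖Complex.exp (-μ * t₀) • f t₀‖ with hc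
  have key : ∀ t, t₀ ≤ t → ‖Complex.exp (-μ * t) • f t‖ ≤
      c + ε / 2 * (Real.exp (a * t) - Real.exp (a * t₀)) := by
    intro t ht
    refine image_norm_le_of_norm_deriv_right_le_deriv_boundary
      (f := fun s : ℝ => Complex.exp (-μ * s) • f s)
      (f' := fun s : ℝ => Complex.exp (-μ * s) • g s) (a := t₀) (b := t)
      (B := fun s => c + ε / 2 * (Real.exp (a * s) - Real.exp (a * t₀)))
      (B' := fun s => ε / 2 * (Real.exp (a * s) * a))
      (fun s _ => (hh s).continuousAt.continuousWithinAt)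
      (fun s _ => (hh s).hasDerivWithinAt) (by simp [hc]) ?_ ?_ ⟨ht, le_rfl⟩
    · intro s
      have h1 : HasDerivAt (fun s : ℝ => a * s) a s := by
        simpa using (hasDerivAt_id s).const_mul a
      exact ((h1.exp.sub_const _).const_mul _).const_add _
    · intro s hs
      have := ht₀ s hs.1
      rw [dist_zero_right] at this
      rw [norm_smul, hnorm]
      have := mul_le_mul_of_nonneg_left this.le (Real.exp_pos (a * s)).le
      linarith
  have hdecay : Tendsto (fun t : ℝ => c * Real.exp (-(a * t))) atTop (nhds 0) := by
    have : Tendsto (fun t : ℝ => Real.exp (-(a * t))) atTop (nhds 0) :=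
      Real.tendsto_exp_neg_atTop_nhds_zero.comp (tendsto_id.const_mul_atTop ha)
    simpa using this.const_mul c
  obtain ⟨t₁, ht₁⟩ := (Metric.tendsto_atTop.1 hdecay) (ε / 2) (by positivity)
  refine ⟨max t₀ t₁, fun t ht => ?_⟩
  have h1 := key t (le_trans (le_max_left _ _) ht)
  have h2 := ht₁ t (le_trans (le_max_right _ _) ht)
  rw [dist_zero_right, Real.norm_eq_abs] at h2
  have h2 := (abs_lt.1 h2).2
  rw [norm_smul, hnorm] at h1
  rw [dist_zero_right]
  have hE := Real.exp_pos (a * t)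
  have hE0 := Real.exp_pos (a * t₀)
  rw [Real.exp_neg, ← div_eq_mul_inv, div_lt_iff₀ hE] at h2
  refine lt_of_mul_lt_mul_left ?_ hE.le
  nlinarith [mul_pos hε hE0]

/-- Solutions of `f' = T f` annihilated by `∏ (T - μ)`, with all `μ` in the open left half-plane,
tend to zero. Peeling off one factor, `g = T f - μ f` is again a solution, annihilated by the
remaining factors, and `f' = μ f + g`. No matrix exponential or Jordan form is needed. -/
theorem tendsto_zero_of_aeval_prod_eq_zero {V : Type*} [NormedAddCommGroup V] [NormedSpace ℂ V]
    [FiniteDimensional ℂ V] (T : Module.End ℂ V) (s : Multiset ℂ) :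
    (∀ μ ∈ s, μ.re < 0) → ∀ f : ℝ → V, (∀ t, HasDerivAt f (T (f t)) t) →
    (∀ t, Polynomial.aeval T (s.map fun μ => Polynomial.X - Polynomial.C μ).prod (f t) = 0) →
    Tendsto f atTop (nhds 0) := by
  induction s using Multiset.induction_on with
  | empty =>
    intro _ f _ h
    have : f = fun _ => 0 := by
      funext t
      simpa using h t
    rw [this]
    exact tendsto_const_nhds
  | cons μ s ih =>
    intro hs f hf h
    have hT : ∀ t, HasDerivAt (fun r => T (f r)) (T (T (f t))) t := fun t =>
      ((LinearMap.toContinuousLinearMap T).restrictScalars ℝ).hasFDerivAt.comp_hasDerivAt t (hf t)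
    have hg : Tendsto (fun t => T (f t) - μ • f t) atTop (nhds 0) := by
      refine ih (fun ν hν => hs ν (Multiset.mem_cons_of_mem hν)) _ (fun t => ?_) (fun t => ?_)
      · rw [map_sub, map_smul]
        exact (hT t).sub ((hf t).const_smul μ)
      · have := h t
        rw [Multiset.map_cons, Multiset.prod_cons, mul_comm, map_mul, Module.End.mul_apply] at this
        simpa using this
    refine tendsto_zero_of_hasDerivAt_smul_add (hs μ (Multiset.mem_cons_self _ _)) (fun t => ?_) hg
    simpa using hf t

/-- Solutions of `e' = A e` tend to zero when `A` is Hurwitz: over `ℂ` the characteristic polynomial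
splits into linear factors with roots in the spectrum, and it annihilates `A` by Cayley-Hamilton. -/
theorem IsHurwitz.tendsto_zero {m : Type*} [Fintype m] [DecidableEq m] {A : Matrix m m ℝ}
    (hA : IsHurwitz A) {e : ℝ → m → ℝ} (he : ∀ t, HasDerivAt e (A *ᵥ e t) t) :
    Tendsto e atTop (nhds 0) := by
  set A' : Matrix m m ℂ := A.map fun x : ℝ => (x : ℂ) with hA'
  have hC : Tendsto (fun t i => (e t i : ℂ)) atTop (nhds 0) := by
    refine tendsto_zero_of_aeval_prod_eq_zero (Matrix.toLin' A') A'.charpoly.roots ?_ _ ?_ ?_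
    · intro μ hμ
      exact hA μ (Matrix.mem_spectrum_iff_isRoot_charpoly.2 (Polynomial.isRoot_of_mem_roots hμ))
    · intro t
      rw [hasDerivAt_pi]
      intro i
      refine (hasDerivAt_pi.1 (he t) i).ofReal_comp.congr_deriv ?_
      simp [hA', Matrix.mulVec, dotProduct]
    · intro t
      rw [← (IsAlgClosed.splits A'.charpoly).eq_prod_roots_of_monic A'.charpoly_monic,
        ← Matrix.charpoly_toLin', LinearMap.aeval_self_charpoly]
      rfl
  rw [tendsto_pi_nhds] at hC ⊢
  intro i
  have := (Complex.continuous_re.tendsto _).comp (hC i)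
  simpa [Function.comp_def] using this

/-- If `τ (x t)` and `τ (y t)` become close and `y` is bounded, then `x t` and `y t` become close.
`τ.symm` need not be uniformly continuous, but it is uniformly so near the compact image of
`closure (range y)`, which contains every `τ (y t)`. -/
theorem Homeomorph.tendsto_sub_of_image {E F : Type*} [NormedAddCommGroup E] [ProperSpace E]
    [NormedAddCommGroup F] (τ : E ≃ₜ F) {x y : ℝ → E}
    (hy : Bornology.IsBounded (Set.range y))
    (h : Tendsto (fun t => τ (x t) - τ (y t)) atTop (nhds 0)) :
    Tendsto (fun t => x t - y t) atTop (nhds 0) := by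
  have hK : IsCompact (Set.image τ (closure (Set.range y))) :=
    (Metric.isCompact_of_isClosed_isBounded isClosed_closure hy.closure).image τ.continuous
  rw [Metric.tendsto_atTop] at h ⊢
  intro ε hε
  have hu := hK.uniformContinuousAt_of_continuousAt τ.symm
    (fun a _ => τ.symm.continuous.continuousAt) (Metric.dist_mem_uniformity hε)
  obtain ⟨δ, hδ, hu⟩ := Metric.mem_uniformity_dist.1 hu
  obtain ⟨N, hN⟩ := h δ hδ
  refine ⟨N, fun t ht => ?_⟩
  have h1 := hN t ht
  rw [dist_zero_right, ← dist_eq_norm, dist_comm] at h1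
  have h2 := hu h1 (Set.mem_image_of_mem τ (subset_closure (Set.mem_range_self t)))
  rw [dist_zero_right, ← dist_eq_norm, dist_comm]
  simpa using h2

theorem stmt5 {n k : ℕ} (hn : 1 ≤ n) (hk : 0 < k)
    (Fhat : (Fin k → Fin n → ℝ) → Fin n → ℝ)
    (Bhat : (Fin k → Fin n → ℝ) → Matrix (Fin n) (Fin n) ℝ)
    (bhath : ℝ) (hbhath : 0 < bhath)
    (hBhatdiag : ∀ zh, (Bhat zh).IsDiag) (hBhatpos : ∀ zh a, bhath ≤ Bhat zh a a)
    -- τ is a homeomorphism of the state space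
    (τ : (Fin k → Fin n → ℝ) ≃ₜ (Fin k → Fin n → ℝ))
    -- bounded reference trajectory and closed-loop trajectory
    (zd z : ℝ → Fin k → Fin n → ℝ)
    (hzd_bdd : Bornology.IsBounded (Set.range zd))
    -- gains and control input
    (K : Fin k → Matrix (Fin n) (Fin n) ℝ) (u : ℝ → Fin n → ℝ)
    -- both ẑ = τ ∘ z and ẑ_d = τ ∘ z_d are differentiable componentwise
    (hdiff : ∀ i : Fin k, Differentiable ℝ fun t => τ (z t) i)
    (hdiff_d : ∀ i : Fin k, Differentiable ℝ fun t => τ (zd t) i)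
    -- chain relations: d/dt q̂ᵢ = q̂ᵢ₊₁ and d/dt q̂_{d,i} = q̂_{d,i+1} for 0 ≤ i ≤ k-2
    (hchain : ∀ (t : ℝ) (i : Fin k) (h : (i : ℕ) + 1 < k),
      HasDerivAt (fun s => τ (z s) i) (τ (z t) ⟨(i : ℕ) + 1, h⟩) t)
    (hchain_d : ∀ (t : ℝ) (i : Fin k) (h : (i : ℕ) + 1 < k),
      HasDerivAt (fun s => τ (zd s) i) (τ (zd t) ⟨(i : ℕ) + 1, h⟩) t)
    -- the feedback-linearization controller
    (hu : ∀ t : ℝ, u t = (Bhat (τ (z t)))⁻¹.mulVec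
      (-Fhat (τ (z t)) + deriv (fun s => τ (zd s) ⟨k - 1, by omega⟩) t
        + ∑ i : Fin k, (K i).mulVec (τ (zd t) i - τ (z t) i)))
    -- last chain relation: d/dt q̂_{k-1} = Fhat(ẑ) + Bhat(ẑ) u
    (hlast : ∀ t : ℝ, HasDerivAt (fun s => τ (z s) ⟨k - 1, by omega⟩)
      (Fhat (τ (z t)) + (Bhat (τ (z t))).mulVec (u t)) t)
    -- the block companion matrix is Hurwitz
    (hA : IsHurwitz (companionMat K)) :
    Tendsto (fun t => z t - zd t) atTop (nhds 0) := by
  refine τ.tendsto_sub_of_image hzd_bdd ?_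
  have hB : ∀ zh v, (Bhat zh).mulVec ((Bhat zh)⁻¹.mulVec v) = v := by
    intro zh v
    have hdet : IsUnit (Bhat zh).det := by
      rw [← (hBhatdiag zh).diagonal_diag, Matrix.det_diagonal]
      exact (Finset.prod_pos fun a _ => hbhath.trans_le (hBhatpos zh a)).ne'.isUnit
    rw [Matrix.mulVec_mulVec, Matrix.mul_nonsing_inv _ hdet, Matrix.one_mulVec]
  -- The controller cancels `F̂` and `B̂`, so the error `τ (z t) - τ (zd t)`, flattened to a vector
  -- indexed by `Fin k × Fin n`, solves the linear system of the companion matrix.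
  have he : ∀ t, HasDerivAt (fun s (p : Fin k × Fin n) => τ (z s) p.1 p.2 - τ (zd s) p.1 p.2)
      (companionMat K *ᵥ fun p => τ (z t) p.1 p.2 - τ (zd t) p.1 p.2) t := by
    intro t
    rw [hasDerivAt_pi]
    rintro ⟨i, a⟩
    by_cases hi : (i : ℕ) + 1 < k
    · refine (hasDerivAt_pi.1 ((hchain t i hi).sub (hchain_d t i hi)) a).congr_deriv ?_
      have hrow : ∀ q : Fin k × Fin n, companionMat K (i, a) q =
          if q = (⟨(i : ℕ) + 1, hi⟩, a) then 1 else 0 := by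
        rintro ⟨j, b⟩
        have hne : (i : ℕ) ≠ k - 1 := by omega
        simp only [companionMat, Matrix.of_apply, Prod.mk.injEq, Fin.ext_iff, hne, if_false]
        split_ifs <;> first | rfl | omega
      simp [Matrix.mulVec, dotProduct, hrow]
    · obtain rfl : i = ⟨k - 1, Nat.sub_lt hk one_pos⟩ := by
        ext
        have := i.2
        simp only
        omega
      refine (hasDerivAt_pi.1 ((hlast t).sub
        (hdiff_d ⟨k - 1, by omega⟩ t).hasDerivAt) a).congr_deriv ?_
      have hrow : ∀ q : Fin k × Fin n,
          companionMat K (⟨k - 1, by omega⟩, a) q = -(K q.1 a q.2) := by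
        rintro ⟨j, b⟩
        have hne : (j : ℕ) ≠ k - 1 + 1 := by omega
        simp [companionMat, hne]
      rw [hu, hB]
      simp only [Matrix.mulVec, dotProduct, hrow, Fintype.sum_prod_type, Pi.add_apply,
        Pi.sub_apply, Pi.neg_apply, Finset.sum_apply]
      have hsum : ∑ j, ∑ b, -(K j a b) * (τ (z t) j b - τ (zd t) j b) =
          ∑ j, ∑ b, K j a b * (τ (zd t) j b - τ (z t) j b) :=
        Finset.sum_congr rfl fun j _ => Finset.sum_congr rfl fun b _ => by ring
      rw [hsum]
      ring
  have hlim := hA.tendsto_zero he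
  rw [tendsto_pi_nhds] at hlim ⊢
  intro i
  rw [tendsto_pi_nhds]
  exact fun a => hlim (i, a)
end
end

section
/- Let A be a real m×m Hurwitz matrix and let e : ℝ → ℝᵐ be differentiable with e′(t) = A e(t) for all t ∈ ℝ. Then e(t) → 0 as t → +∞. -/
/-!
Dualize: for a complex covector `w` put `u_w(t) = w ⬝ᵥ e(t)`. The covectors with `u_w → 0` form a
subspace, so it suffices to treat generalized eigenvectors `w` of `Aᵀ`, which span the whole space
over `ℂ`. If `(Aᵀ - μ)^(k+1) w = 0`, then `u_w' = μ u_w + u_{(Aᵀ - μ) w}`, where the forcing term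
tends to `0` by induction on `k`. Since `Re μ < 0`, a scalar linear equation with forcing tending
to `0` has all its solutions tending to `0` (`tendsto_zero_of_forced_decay`). Testing on the
standard basis covectors gives convergence of each coordinate of `e`.
-/

open Matrix Filter

/-- A solution of `u' = μ u + g` with `Re μ < 0` and `g → 0` tends to `0`: the derivative of
`exp (-μ t) u(t)` is `exp (-μ t) g(t)`, which is bounded by `ε exp (-Re μ t)` for large `t`. -/
theorem tendsto_zero_of_forced_decay {μ : ℂ} (hμ : μ.re < 0) {u g : ℝ → ℂ}
    (hu : ∀ t : ℝ, HasDerivAt u (μ * u t + g t) t) (hg : Tendsto g atTop (nhds 0)) :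
    Tendsto u atTop (nhds 0) := by
  obtain ⟨a, ha⟩ : ∃ a : ℝ, a = -μ.re := ⟨_, rfl⟩
  have ha0 : 0 < a := by linarith
  have hE : ∀ t : ℝ, HasDerivAt (fun t : ℝ => Complex.exp (-μ * t))
      (Complex.exp (-μ * t) * -μ) t := fun t => by
    have h := ((Complex.ofRealCLM.hasDerivAt (x := t)).const_mul (-μ)).cexp
    simpa using h
  have hnE : ∀ t : ℝ, ‖Complex.exp (-μ * t)‖ = Real.exp (a * t) := fun t => by
    rw [Complex.norm_exp]; simp [ha]
  have hv : ∀ t : ℝ, HasDerivAt (fun t : ℝ => Complex.exp (-μ * t) * u t)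
      (Complex.exp (-μ * t) * g t) t := fun t => by
    refine ((hE t).mul (hu t)).congr_deriv ?_
    ring
  rw [Metric.tendsto_atTop]
  intro ε hε
  obtain ⟨T, hT⟩ := Metric.tendsto_atTop.1 hg (a * (ε / 2)) (by positivity)
  have hB : ∀ t : ℝ, HasDerivAt
      (fun t : ℝ => Real.exp (a * T) * ‖u T‖ + ε / 2 * (Real.exp (a * t) - Real.exp (a * T)))
      (a * (ε / 2) * Real.exp (a * t)) t := fun t => by
    have h := ((((hasDerivAt_id t).const_mul a).exp.sub_const (Real.exp (a * T))).const_mul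
      (ε / 2)).const_add (Real.exp (a * T) * ‖u T‖)
    refine h.congr_deriv ?_
    simp
    ring
  have hbound : ∀ t ≥ T, ‖u t‖ ≤ Real.exp (-(a * t)) * (Real.exp (a * T) * ‖u T‖) + ε / 2 := by
    intro t ht
    have h := image_norm_le_of_norm_deriv_right_le_deriv_boundary (a := T) (b := t)
      (f := fun t : ℝ => Complex.exp (-μ * t) * u t)
      (fun s _ => (hv s).continuousAt.continuousWithinAt)
      (fun s _ => (hv s).hasDerivWithinAt) (by rw [norm_mul, hnE]; simp) hB
      (fun s hs => by
        have h1 := (hT s hs.1).le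
        rw [dist_zero_right] at h1
        rw [norm_mul, hnE, mul_comm]
        gcongr) ⟨ht, le_rfl⟩
    rw [norm_mul, hnE] at h
    have h2 : Real.exp (a * t) * ‖u t‖ ≤ Real.exp (a * T) * ‖u T‖ + ε / 2 * Real.exp (a * t) := by
      have : 0 ≤ ε / 2 * Real.exp (a * T) := by positivity
      linarith
    have h3 := mul_le_mul_of_nonneg_left h2 (Real.exp_pos (-(a * t))).le
    have h4 : Real.exp (-(a * t)) * Real.exp (a * t) = 1 := by
      rw [← Real.exp_add]; simp
    calc ‖u t‖ = (Real.exp (-(a * t)) * Real.exp (a * t)) * ‖u t‖ := by rw [h4, one_mul]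
      _ ≤ Real.exp (-(a * t)) * (Real.exp (a * T) * ‖u T‖)
          + ε / 2 * (Real.exp (-(a * t)) * Real.exp (a * t)) := by linarith
      _ = _ := by rw [h4, mul_one]
  have hlim : Tendsto (fun t : ℝ => Real.exp (-(a * t)) * (Real.exp (a * T) * ‖u T‖) + ε / 2)
      atTop (nhds (0 * (Real.exp (a * T) * ‖u T‖) + ε / 2)) :=
    ((Real.tendsto_exp_neg_atTop_nhds_zero.comp
      (tendsto_id.const_mul_atTop ha0)).mul_const _).add_const _
  have hev := hlim.eventually_lt_const (u := ε) (by linarith)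
  obtain ⟨N, hN⟩ := eventually_atTop.1 hev
  refine ⟨max T N, fun t ht => ?_⟩
  rw [dist_zero_right]
  exact (hbound t (le_trans (le_max_left _ _) ht)).trans_lt (hN t (le_trans (le_max_right _ _) ht))

theorem stmt7 {m : ℕ} (A : Matrix (Fin m) (Fin m) ℝ) (hA : IsHurwitz A)
    (e : ℝ → Fin m → ℝ) (he : ∀ t : ℝ, HasDerivAt e (A.mulVec (e t)) t) :
    Tendsto e atTop (nhds 0) := by
  set M : Matrix (Fin m) (Fin m) ℂ := A.map fun x : ℝ => (x : ℂ) with hM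
  let x : ℝ → Fin m → ℂ := fun t i => (e t i : ℂ)
  have hx : ∀ t, HasDerivAt x (M *ᵥ x t) t := fun t => by
    rw [hasDerivAt_pi]
    intro i
    have h := ((hasDerivAt_pi.1 (he t)) i).ofReal_comp
    refine h.congr_deriv ?_
    simp [Matrix.mulVec, dotProduct, hM, x]
  -- The covectors along which the solution decays.
  let S : Submodule ℂ (Fin m → ℂ) :=
    { carrier := {w | Tendsto (fun t => w ⬝ᵥ x t) atTop (nhds 0)}
      add_mem' := fun {v w} hv hw => by
        simpa [add_dotProduct] using Tendsto.add hv hw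
      zero_mem' := by simp
      smul_mem' := fun c w hw => by
        simpa [smul_dotProduct] using Tendsto.const_mul c hw }
  have hdot : ∀ (w : Fin m → ℂ) t, HasDerivAt (fun t => w ⬝ᵥ x t) (w ⬝ᵥ (M *ᵥ x t)) t := by
    intro w t
    have h := HasDerivAt.fun_sum (u := Finset.univ) (fun i _ =>
      ((hasDerivAt_pi.1 (hx t)) i).const_mul (w i))
    exact h
  let f : Module.End ℂ (Fin m → ℂ) := Matrix.toLin' Mᵀ
  have hgen : ∀ (μ : ℂ), μ.re < 0 → ∀ (k : ℕ) (w : Fin m → ℂ),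
      ((f - algebraMap ℂ _ μ) ^ k) w = 0 → w ∈ S := by
    intro μ hμ k
    induction k with
    | zero =>
      intro w hw
      have : w = 0 := by simpa using hw
      exact this ▸ S.zero_mem
    | succ k ih =>
      intro w hw
      have hψ := ih ((f - algebraMap ℂ _ μ) w) (by rw [pow_succ] at hw; exact hw)
      refine tendsto_zero_of_forced_decay hμ (fun t => ?_) hψ
      refine (hdot w t).congr_deriv ?_
      simp [f, sub_dotProduct, Matrix.mulVec_transpose, Matrix.dotProduct_mulVec,
        Module.algebraMap_end_apply]
  have hS : S = ⊤ := by
    rw [eq_top_iff, ← Module.End.iSup_maxGenEigenspace_eq_top f]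
    refine iSup_le fun μ w hw => ?_
    obtain ⟨k, hk⟩ := Module.End.mem_maxGenEigenspace _ _ _ |>.1 hw
    rw [← Algebra.algebraMap_eq_smul_one] at hk
    by_cases hμ : μ ∈ spectrum ℂ M
    · exact hgen μ (hA μ hμ) k w hk
    -- Off the spectrum, `Aᵀ - μ` is invertible and the generalized eigenspace is trivial.
    · have h1 : IsUnit (algebraMap ℂ (Matrix (Fin m) (Fin m) ℂ) μ - M) := by
        simpa [spectrum.mem_iff] using hμ
      have h2 : IsUnit (Mᵀ - algebraMap ℂ (Matrix (Fin m) (Fin m) ℂ) μ) := by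
        have := ((Matrix.isUnit_transpose _).2 h1).neg
        simpa [Matrix.algebraMap_eq_diagonal] using this
      have h3 : IsUnit (f - algebraMap ℂ (Module.End ℂ (Fin m → ℂ)) μ) := by
        have := h2.map (Matrix.toLinAlgEquiv' (R := ℂ) (n := Fin m))
        rw [map_sub, AlgEquiv.commutes] at this
        exact this
      have h4 := ((Module.End.isUnit_iff _).1 (h3.pow k)).1
      have : w = 0 := h4 (by rw [hk, map_zero])
      exact this ▸ S.zero_mem
  rw [tendsto_pi_nhds]
  intro i
  have h : Pi.single i 1 ∈ S := hS ▸ Submodule.mem_top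
  have h' : Tendsto (fun t => Pi.single i 1 ⬝ᵥ x t) atTop (nhds 0) := h
  have h2 := (Complex.continuous_re.tendsto 0).comp h'
  simpa [Function.comp_def, x] using h2
end

section
/- Let τ : ℝᵐ → ℝᵐ be a homeomorphism, let z_d : ℝ → ℝᵐ have bounded range, and let z : ℝ → ℝᵐ. If τ(z(t)) − τ(z_d(t)) → 0 as t → +∞, then z(t) − z_d(t) → 0 as t → +∞. -/
open Filter

/-! The image under `τ` of the closure of the range of `zd` is compact, and a continuous map is
uniformly continuous at the points of a compact set, with the second point allowed to range over
the whole space (`IsCompact.uniformContinuousAt_of_continuousAt`). Applied to `τ.symm`, this turns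
closeness of `τ (z t)` to `τ (zd t)` into closeness of `z t` to `zd t`. -/

theorem stmt10 {m : ℕ} (τ : (Fin m → ℝ) ≃ₜ (Fin m → ℝ))
    (zd z : ℝ → Fin m → ℝ) (hzd : Bornology.IsBounded (Set.range zd))
    (h : Tendsto (fun t => τ (z t) - τ (zd t)) atTop (nhds 0)) :
    Tendsto (fun t => z t - zd t) atTop (nhds 0) := by
  have hK : IsCompact (τ '' closure (Set.range zd)) :=
    hzd.isCompact_closure.image τ.continuous
  rw [Metric.tendsto_nhds] at h ⊢
  intro ε hε
  obtain ⟨δ, hδ, H⟩ := Metric.mem_uniformity_dist.1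
    (hK.uniformContinuousAt_of_continuousAt τ.symm
      (fun a _ => τ.symm.continuous.continuousAt) (Metric.dist_mem_uniformity hε))
  filter_upwards [h δ hδ] with t ht
  rw [dist_zero_right, ← dist_eq_norm, dist_comm] at ht ⊢
  simpa using H ht (Set.mem_image_of_mem τ (subset_closure (Set.mem_range_self t)))
end

section
/- Let l ≥ 1, let f : ℝᵃ × ℝˡ → ℝᶜ be differentiable, and let G₁,…,G_{l+1} : ℝˡ → ℝˡ be such that for every s ∈ ℝˡ the l×l matrix with columns G₂(s)−G₁(s),…,G_{l+1}(s)−G₁(s) is invertible. If for every (x,s) and every i ∈ {2,…,l+1} the Fréchet derivative of f at (x,s) applied to the vector (0, G_i(s) − G₁(s)) is zero, then f does not depend on its second argument: there exists g : ℝᵃ → ℝᶜ with f(x,s) = g(x) for all (x,s). -/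
/-!
The columns `G_i(s) - G₁(s)` of an invertible matrix span `ℝˡ`, so the derivative of `f` at `(x, s)`
kills every vector `(0, v)`. Hence each partial map `s ↦ f (x, s)` has zero derivative
on all of `ℝˡ` and is constant, and `g x = f (x, 0)` works.
-/

theorem stmt14 {a c l : ℕ} (hl : 1 ≤ l)
    (f : (Fin a → ℝ) × (Fin l → ℝ) → Fin c → ℝ)
    (hdiff : Differentiable ℝ f)
    (G : Fin (l + 1) → (Fin l → ℝ) → Fin l → ℝ)
    -- for every s, the l × l matrix with columns G₂(s) − G₁(s), …, G_{l+1}(s) − G₁(s)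
    -- is invertible
    (hG : ∀ s : Fin l → ℝ,
      IsUnit (Matrix.of fun (i j : Fin l) => G j.succ s i - G 0 s i))
    -- the derivative of f kills (0, G_i(s) − G₁(s)) for every i ∈ {2, …, l+1}
    (hzero : ∀ (x : Fin a → ℝ) (s : Fin l → ℝ) (i : Fin l),
      fderiv ℝ f (x, s) (0, G i.succ s - G 0 s) = 0) :
    ∃ g : (Fin a → ℝ) → Fin c → ℝ, ∀ (x : Fin a → ℝ) (s : Fin l → ℝ), f (x, s) = g x := by
  refine ⟨fun x => f (x, 0), fun x s => ?_⟩
  have hvert : ∀ (t v : Fin l → ℝ), fderiv ℝ f (x, t) (0, v) = 0 := by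
    intro t v
    obtain ⟨w, hw⟩ := (Matrix.mulVec_surjective_iff_isUnit.mpr (hG t)) v
    have hv : ((0, v) : (Fin a → ℝ) × (Fin l → ℝ)) =
        ∑ j, w j • ((0, G j.succ t - G 0 t) : (Fin a → ℝ) × (Fin l → ℝ)) := by
      rw [← hw]
      ext i
      · simp [Prod.fst_sum]
      · simp [Prod.snd_sum, Matrix.mulVec, dotProduct, mul_comm]
    rw [hv, map_sum]
    exact Finset.sum_eq_zero fun j _ => by rw [map_smul, hzero, smul_zero]
  have hpartial : ∀ t : Fin l → ℝ, HasFDerivAt (fun t => f (x, t))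
      ((fderiv ℝ f (x, t)).comp (ContinuousLinearMap.inr ℝ (Fin a → ℝ) (Fin l → ℝ))) t :=
    fun t => (hdiff (x, t)).hasFDerivAt.comp t (hasFDerivAt_prodMk_right x t)
  refine is_const_of_fderiv_eq_zero (𝕜 := ℝ) (f := fun t => f (x, t))
    (fun t => (hpartial t).differentiableAt) (fun t => ?_) s 0
  rw [(hpartial t).fderiv]
  exact ContinuousLinearMap.ext fun v => hvert t v
end
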